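/- Let (B'' | A'') be an irreducible skew-symmetric augmented matrix of dimension m, and let (B_0 | A_0), (B_1 | A_1), ..., (B_n | A_n) be a finite chain of skew-symmetric augmented matrices with (B_0 | A_0) = (B'' | A'') and such that each (B_{i+1} | A_{i+1}) is obtained from (B_i | A_i) by a single permutation, reduction of type 1 or 2, or extension of type 1 or 2. Then every (B_i | A_i) has dimension at least m, and whenever (B_i | A_i) has dimension exactly m it is a permutation of (B'' | A''). -/

import Mathlib

/-- A skew-symmetric augmented matrix `(B ∣ A)` of dimension `n`:
`B` is an `n × n` integer matrix with `Bᵀ = -B` and `A` is an integer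
column vector of length `n`.  Dimension `0` gives the empty matrix. -/
structure SkewAug where
  n : ℕ
  B : Matrix (Fin n) (Fin n) ℤ
  A : Fin n → ℤ
  skew : B.transpose = -B

namespace SkewAug

/-- The permutation matrix of a permutation `σ` of `Fin n`. -/
def permMatrixOf {n : ℕ} (σ : Equiv.Perm (Fin n)) : Matrix (Fin n) (Fin n) ℤ :=
  Matrix.of fun i j => if σ j = i then 1 else 0

/-- `P` is a permutation matrix. -/
def IsPermMatrix {n : ℕ} (P : Matrix (Fin n) (Fin n) ℤ) : Prop :=
  ∃ σ : Equiv.Perm (Fin n), P = permMatrixOf σ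

/-- `PermStep M N` : `N` is a permutation of `M`, i.e. there is a permutation
matrix `P` with `N = (P M.B Pᵀ ∣ P M.A)`. -/
def PermStep (M N : SkewAug) : Prop :=
  ∃ (h : M.n = N.n) (P : Matrix (Fin N.n) (Fin N.n) ℤ),
    IsPermMatrix P ∧
    N.B = P * (Matrix.reindex (finCongr h) (finCongr h) M.B) * P.transpose ∧
    N.A = P.mulVec (fun i => M.A (Fin.cast h.symm i))

/-- `DeleteAt M S N` : `N` is obtained from `M` by deleting the rows and
columns of `M.B` indexed by `S` and the entries of `M.A` indexed by `S`. -/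
def DeleteAt (M : SkewAug) (S : Set (Fin M.n)) (N : SkewAug) : Prop :=
  ∃ e : Fin N.n → Fin M.n, StrictMono e ∧ (∀ k, k ∈ Set.range e ↔ k ∉ S) ∧
    (∀ i j, N.B i j = M.B (e i) (e j)) ∧ (∀ i, N.A i = M.A (e i))

/-- The condition allowing a reduction of type 1 at index `j`:
`A j = 0` and the `j`-th column of `B` is the zero vector or equals `A`. -/
def Red1Cond (M : SkewAug) (j : Fin M.n) : Prop :=
  M.A j = 0 ∧ ((∀ i, M.B i j = 0) ∨ (∀ i, M.B i j = M.A i))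

/-- The condition allowing a reduction of type 2 at distinct indices `r, t`:
`A r = -A t` and the sum of the `r`-th and `t`-th columns of `B` equals `A`. -/
def Red2Cond (M : SkewAug) (r t : Fin M.n) : Prop :=
  r ≠ t ∧ M.A r = -M.A t ∧ ∀ i, M.B i r + M.B i t = M.A i

/-- `N` is obtained from `M` by a reduction of type 1. -/
def Red1 (M N : SkewAug) : Prop :=
  ∃ j : Fin M.n, Red1Cond M j ∧ DeleteAt M {j} N

/-- `N` is obtained from `M` by a reduction of type 2. -/
def Red2 (M N : SkewAug) : Prop :=
  ∃ r t : Fin M.n, Red2Cond M r t ∧ DeleteAt M {r, t} N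

/-- A single move: a permutation, a reduction of type 1 or 2, or an
extension of type 1 or 2 (the inverse of a reduction). -/
def Move (M N : SkewAug) : Prop :=
  PermStep M N ∨ Red1 M N ∨ Red2 M N ∨ Red1 N M ∨ Red2 N M

/-- S-equivalence: `M` can be transformed into `N` by a finite sequence of
moves. -/
def SEquiv : SkewAug → SkewAug → Prop :=
  Relation.ReflTransGen Move

/-- A reduction of type 1 or type 2 can be applied to `M`. -/
def Reducible (M : SkewAug) : Prop :=
  (∃ j, Red1Cond M j) ∨ (∃ r t, Red2Cond M r t)

/-- `M` is irreducible: no reduction of type 1 or type 2 can be applied. -/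
def Irreducible (M : SkewAug) : Prop := ¬ Reducible M

/-- The empty skew-symmetric augmented matrix. -/
def empty : SkewAug := ⟨0, 0, 0, by simp⟩

/-- `M` is trivial if it is S-equivalent to the empty matrix. -/
def Trivial (M : SkewAug) : Prop := SEquiv M empty

end SkewAug

/-!
Say that `N` contracts to `K` if, up to relabelling, `K` arises from `N` by at most one reduction.
Each move is a contraction or the inverse of one, and contractions have the diamond property.
Indeed, suppose two contractions of `N` delete the index sets `S` and `T`. In general contractions
may also delete `S \ T` and `T \ S`, so both results contract to `N` with `S ∪ T` deleted. The
exception is that of two reductions of type 2 sharing exactly one index: the other two indices then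
carry equal rows, columns and entries, and swapping them identifies the results.

By Church–Rosser, a matrix `N` reachable from an irreducible `M` has a common iterated contraction
`K` with `M`. Irreducibility makes `K` a relabelling of `M`, so `M` is a principal sub-matrix of
`N` up to relabelling.
-/

namespace SkewAug

open Relation

variable {K M N L : SkewAug} {S T : Set (Fin N.n)} {r s t x : Fin N.n}

/-- `e` exhibits `K` as the principal augmented sub-matrix of `N` on the indices `Set.range e`.
The map need not be monotone, so that relabellings are the surjective embeddings. -/
structure IsEmbedding (e : Fin K.n → Fin N.n) : Prop where
  injective : Function.Injective e
  B_eq : K.B = N.B.submatrix e e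
  A_eq : K.A = N.A ∘ e

namespace IsEmbedding

lemma id (N : SkewAug) : IsEmbedding (_root_.id : Fin N.n → Fin N.n) :=
  ⟨Function.injective_id, rfl, rfl⟩

lemma comp {e : Fin M.n → Fin N.n} {d : Fin K.n → Fin M.n} (he : IsEmbedding e)
    (hd : IsEmbedding d) : IsEmbedding (e ∘ d) where
  injective := he.injective.comp hd.injective
  B_eq := by rw [hd.B_eq, he.B_eq, Matrix.submatrix_submatrix]
  A_eq := by rw [hd.A_eq, he.A_eq, Function.comp_assoc]

lemma of_comp {e : Fin M.n → Fin N.n} {d : Fin K.n → Fin M.n} (he : IsEmbedding e)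
    (hed : IsEmbedding (e ∘ d)) : IsEmbedding d where
  injective := hed.injective.of_comp
  B_eq := by rw [hed.B_eq, he.B_eq, Matrix.submatrix_submatrix]
  A_eq := by rw [hed.A_eq, he.A_eq, Function.comp_assoc]

lemma dim_le {e : Fin K.n → Fin N.n} (he : IsEmbedding e) : K.n ≤ N.n := by
  simpa using Fintype.card_le_of_injective e he.injective

lemma bijective {e : Fin K.n → Fin N.n} (he : IsEmbedding e) (hn : K.n = N.n) :
    Function.Bijective e :=
  (Fintype.bijective_iff_injective_and_card e).2 ⟨he.injective, by simpa using hn⟩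

end IsEmbedding

lemma B_apply_eq_neg (N : SkewAug) (i j : Fin N.n) : N.B i j = -N.B j i :=
  congrFun₂ N.skew j i

lemma isEmbedding_swap (hA : N.A s = N.A t) (hB : ∀ i, N.B i s = N.B i t) :
    IsEmbedding (K := N) (Equiv.swap s t) where
  injective := Equiv.injective _
  A_eq := funext fun i => (Equiv.apply_swap_eq_self hA i).symm
  B_eq := by
    have hrow (j : Fin N.n) : N.B s j = N.B t j := by rw [N.B_apply_eq_neg, hB, ← N.B_apply_eq_neg]
    ext i j
    calc N.B i j = N.B (Equiv.swap s t i) j :=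
          (Equiv.apply_swap_eq_self (v := fun k => N.B k j) (hrow j) i).symm
      _ = N.B (Equiv.swap s t i) (Equiv.swap s t j) :=
          (Equiv.apply_swap_eq_self (hB _) j).symm

lemma exists_isEmbedding_range_eq (N : SkewAug) (S : Set (Fin N.n)) :
    ∃ (K : SkewAug) (e : Fin K.n → Fin N.n), IsEmbedding e ∧ Set.range e = S := by
  let e : Fin (Nat.card S) → Fin N.n := Subtype.val ∘ (Finite.equivFin S).symm
  let K : SkewAug := ⟨Nat.card S, N.B.submatrix e e, N.A ∘ e, by
    rw [Matrix.transpose_submatrix, N.skew, Matrix.submatrix_neg]; rfl⟩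
  refine ⟨K, e, ⟨Subtype.val_injective.comp (Equiv.injective _), rfl, rfl⟩, ?_⟩
  exact (EquivLike.range_comp _ _).trans Subtype.range_coe

lemma permMatrixOf_eq_permMatrix {n : ℕ} (σ : Equiv.Perm (Fin n)) :
    permMatrixOf σ = (σ⁻¹).permMatrix ℤ := by
  ext i j
  simp [permMatrixOf, PEquiv.toMatrix_apply, Equiv.eq_symm_apply, eq_comm]

lemma permMatrixOf_conj {n : ℕ} (σ : Equiv.Perm (Fin n)) (X : Matrix (Fin n) (Fin n) ℤ) :
    permMatrixOf σ * X * (permMatrixOf σ).transpose = X.submatrix σ.symm σ.symm := by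
  rw [permMatrixOf_eq_permMatrix, Matrix.transpose_permMatrix, inv_inv,
    PEquiv.toMatrix_toPEquiv_mul, PEquiv.mul_toMatrix_toPEquiv, Matrix.submatrix_submatrix]
  rfl

lemma permMatrixOf_mulVec {n : ℕ} (σ : Equiv.Perm (Fin n)) (v : Fin n → ℤ) :
    (permMatrixOf σ).mulVec v = v ∘ σ.symm := by
  rw [permMatrixOf_eq_permMatrix, Matrix.permMatrix_mulVec]
  rfl

lemma permStep_iff_exists_isEmbedding :
    PermStep M N ↔ M.n = N.n ∧ ∃ e : Fin M.n → Fin N.n, IsEmbedding e := by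
  constructor
  · rintro ⟨h, _, ⟨σ, rfl⟩, hB, hA⟩
    rw [permMatrixOf_conj] at hB
    rw [permMatrixOf_mulVec] at hA
    refine ⟨h, (finCongr h).trans σ, Equiv.injective _, ?_, ?_⟩
    · ext i j
      simp [hB]
    · ext i
      simp [hA]
  · rintro ⟨h, e, he⟩
    let σ : Equiv.Perm (Fin N.n) := (finCongr h.symm).trans (.ofBijective e (he.bijective h))
    have hσ (i : Fin N.n) : e (Fin.cast h.symm (σ.symm i)) = i := σ.apply_symm_apply i
    refine ⟨h, permMatrixOf σ, ⟨σ, rfl⟩, ?_, ?_⟩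
    · rw [permMatrixOf_conj]
      ext i j
      simp [he.B_eq, hσ]
    · rw [permMatrixOf_mulVec]
      ext i
      simp [he.A_eq, hσ]

/-- The sets of indices which a single reduction of `N` may delete, together with the empty set,
so that the identity counts as a trivial reduction. -/
inductive Removable (N : SkewAug) : Set (Fin N.n) → Prop
  | empty : Removable N ∅
  | singleton {j : Fin N.n} : Red1Cond N j → Removable N {j}
  | pair {r t : Fin N.n} : Red2Cond N r t → Removable N {r, t}

lemma Irreducible.eq_empty_of_removable (hN : Irreducible N) (hS : N.Removable S) : S = ∅ := by
  cases hS with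
  | empty => rfl
  | singleton hj => exact absurd (Or.inl ⟨_, hj⟩) hN
  | pair hrt => exact absurd (Or.inr ⟨_, _, hrt⟩) hN

lemma Red2Cond.symm (h : Red2Cond N r t) : Red2Cond N t r :=
  ⟨h.1.symm, by rw [h.2.1, neg_neg], fun i => by rw [add_comm, h.2.2]⟩

lemma Red2Cond.red1Cond_right (h : Red2Cond N r t) (hr : Red1Cond N r) : Red1Cond N t := by
  obtain ⟨-, hA, hB⟩ := h
  obtain ⟨hr0, hcol | hcol⟩ := hr
  · exact ⟨by lia, Or.inr fun i => by linarith [hB i, hcol i]⟩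
  · exact ⟨by lia, Or.inl fun i => by linarith [hB i, hcol i]⟩

lemma Red2Cond.exists_isEmbedding_image_pair (hs : Red2Cond N r s) (ht : Red2Cond N r t) :
    ∃ φ : Fin N.n → Fin N.n, IsEmbedding φ ∧ φ '' {r, s} = {r, t} := by
  have hA : N.A s = N.A t := by linarith [hs.2.1, ht.2.1]
  have hB (i : Fin N.n) : N.B i s = N.B i t := by linarith [hs.2.2 i, ht.2.2 i]
  refine ⟨Equiv.swap s t, isEmbedding_swap hA hB, ?_⟩
  rw [Set.image_pair, Equiv.swap_apply_of_ne_of_ne hs.1 ht.1, Equiv.swap_apply_left]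

lemma Red2Cond.removable_sdiff_singleton (h : Red2Cond N r t) (hr : Red1Cond N r) :
    N.Removable ({r} \ {r, t}) ∧ N.Removable ({r, t} \ {r}) := by
  have hempty : ({r} : Set (Fin N.n)) \ {r, t} = ∅ := Set.sdiff_eq_empty.2 (by simp)
  have hsingleton : ({r, t} : Set (Fin N.n)) \ {r} = {t} := by simp [h.1]
  rw [hempty, hsingleton]
  exact ⟨.empty, .singleton (h.red1Cond_right hr)⟩

lemma Removable.eq_singleton_or_pair_of_mem (hS : N.Removable S) (hx : x ∈ S) :
    (Red1Cond N x ∧ S = {x}) ∨ ∃ y, Red2Cond N x y ∧ S = {x, y} := by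
  cases hS with
  | empty => exact absurd hx (Set.notMem_empty x)
  | singleton hj =>
    obtain rfl : x = _ := hx
    exact Or.inl ⟨hj, rfl⟩
  | pair hrt =>
    obtain rfl | rfl : x = _ ∨ x = _ := hx
    · exact Or.inr ⟨_, hrt, rfl⟩
    · exact Or.inr ⟨_, hrt.symm, Set.pair_comm _ _⟩

lemma Removable.sdiff_or_exists_isEmbedding_image_eq (hS : N.Removable S) (hT : N.Removable T) :
    (N.Removable (S \ T) ∧ N.Removable (T \ S)) ∨
      ∃ φ : Fin N.n → Fin N.n, IsEmbedding φ ∧ φ '' S = T := by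
  by_cases hST : Disjoint S T
  · rw [hST.sdiff_eq_left, hST.sdiff_eq_right]
    exact Or.inl ⟨hS, hT⟩
  obtain ⟨x, hxS, hxT⟩ := Set.not_disjoint_iff.1 hST
  obtain ⟨hx, rfl⟩ | ⟨s, hs, rfl⟩ := hS.eq_singleton_or_pair_of_mem hxS <;>
    obtain ⟨hx', rfl⟩ | ⟨t, ht, rfl⟩ := hT.eq_singleton_or_pair_of_mem hxT
  · exact Or.inr ⟨_, .id N, Set.image_id _⟩
  · exact Or.inl (ht.removable_sdiff_singleton hx)
  · exact Or.inl (hs.removable_sdiff_singleton hx').symm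
  · exact Or.inr (hs.exists_isEmbedding_image_pair ht)

lemma IsEmbedding.removable_preimage {e : Fin K.n → Fin N.n} (he : IsEmbedding e)
    (hT : N.Removable T) (hTe : T ⊆ Set.range e) : K.Removable (e ⁻¹' T) := by
  have hB (i j : Fin K.n) : K.B i j = N.B (e i) (e j) := congrFun₂ he.B_eq i j
  have hA (i : Fin K.n) : K.A i = N.A (e i) := congrFun he.A_eq i
  cases hT with
  | empty => exact .empty
  | singleton hj =>
    obtain ⟨j, rfl⟩ := hTe rfl
    have hj' : Red1Cond K j :=
      ⟨by rw [hA, hj.1], hj.2.imp (fun h i => by rw [hB, h]) (fun h i => by rw [hB, hA, h])⟩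
    rw [← Set.image_singleton, Set.preimage_image_eq _ he.injective]
    exact .singleton hj'
  | pair hrt =>
    obtain ⟨r, rfl⟩ := hTe (Set.mem_insert _ _)
    obtain ⟨t, rfl⟩ := hTe (Set.mem_insert_of_mem _ rfl)
    have hrt' : Red2Cond K r t :=
      ⟨ne_of_apply_ne e hrt.1, by rw [hA, hA, hrt.2.1], fun i => by rw [hB, hB, hA, hrt.2.2]⟩
    rw [← Set.image_pair, Set.preimage_image_eq _ he.injective]
    exact .pair hrt'

/-- `N` contracts to `K` if, up to relabelling, `K` is `N` itself or the result of one reduction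
of `N`. -/
def Contracts (N K : SkewAug) : Prop :=
  ∃ e : Fin K.n → Fin N.n, IsEmbedding e ∧ N.Removable (Set.range e)ᶜ

lemma IsEmbedding.contracts_of_range_subset {d : Fin M.n → Fin N.n} {e : Fin K.n → Fin N.n}
    (hd : IsEmbedding d) (he : IsEmbedding e) (hsub : Set.range e ⊆ Set.range d)
    (hrem : N.Removable (Set.range d \ Set.range e)) : Contracts M K := by
  obtain ⟨c, rfl⟩ := Set.range_subset_range_iff_exists_comp.1 hsub
  refine ⟨c, hd.of_comp he, ?_⟩
  convert hd.removable_preimage hrem Set.sdiff_subset using 1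
  rw [Set.preimage_sdiff, Set.preimage_range, Set.range_comp, Set.preimage_image_eq _ hd.injective,
    Set.compl_eq_univ_sdiff]

lemma Contracts.diamond (hK : Contracts N K) (hL : Contracts N L) :
    Join Contracts K L := by
  obtain ⟨d, hd, hdS⟩ := hK
  obtain ⟨e, he, heT⟩ := hL
  obtain ⟨hST, hTS⟩ | ⟨φ, hφ, hφST⟩ := hdS.sdiff_or_exists_isEmbedding_image_eq heT
  · rw [compl_sdiff_compl] at hST hTS
    obtain ⟨P, p, hp, hrange⟩ := N.exists_isEmbedding_range_eq (Set.range d ∩ Set.range e)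
    refine ⟨P, hd.contracts_of_range_subset hp ?_ ?_, he.contracts_of_range_subset hp ?_ ?_⟩
    all_goals rw [hrange]
    · exact Set.inter_subset_left
    · rwa [Set.sdiff_self_inter]
    · exact Set.inter_subset_right
    · rwa [Set.inter_comm, Set.sdiff_self_inter]
  · have hrange : Set.range (φ ∘ d) = Set.range e := by
      rw [Set.range_comp, ← compl_inj_iff, ← Set.image_compl_eq (hφ.bijective rfl), hφST]
    refine ⟨L, (hφ.comp hd).contracts_of_range_subset he hrange.ge ?_,
      (IsEmbedding.id L).contracts_of_range_subset (.id L) subset_rfl ?_⟩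
    · rw [hrange, Set.sdiff_self]
      exact .empty
    · rw [Set.sdiff_self]
      exact .empty

lemma DeleteAt.contracts (h : DeleteAt N S K) (hS : N.Removable S) : Contracts N K := by
  obtain ⟨e, he, hrange, hB, hA⟩ := h
  have hcompl : (Set.range e)ᶜ = S := by
    ext k
    rw [Set.mem_compl_iff, hrange, not_not]
  exact ⟨e, ⟨he.injective, Matrix.ext hB, funext hA⟩, hcompl ▸ hS⟩

lemma Red1.contracts (h : Red1 N K) : Contracts N K :=
  let ⟨_, hj, hdel⟩ := h
  hdel.contracts (.singleton hj)

lemma Red2.contracts (h : Red2 N K) : Contracts N K :=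
  let ⟨_, _, hrt, hdel⟩ := h
  hdel.contracts (.pair hrt)

lemma PermStep.contracts_symm (h : PermStep M N) : Contracts N M := by
  obtain ⟨hn, e, he⟩ := permStep_iff_exists_isEmbedding.1 h
  refine ⟨e, he, ?_⟩
  rw [(he.bijective hn).surjective.range_eq, Set.compl_univ]
  exact .empty

lemma Move.contracts_or_contracts (h : Move M N) : Contracts M N ∨ Contracts N M := by
  obtain h | h | h | h | h := h
  · exact Or.inr h.contracts_symm
  · exact Or.inl h.contracts
  · exact Or.inl h.contracts
  · exact Or.inr h.contracts
  · exact Or.inr h.contracts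

lemma SEquiv.join_contracts (h : SEquiv M N) : Join (ReflTransGen Contracts) M N := by
  have hequiv : Equivalence (Join (ReflTransGen Contracts)) :=
    equivalence_join_reflTransGen fun _ _ _ hb hc =>
      let ⟨d, hbd, hcd⟩ := hb.diamond hc
      ⟨d, .single hbd, .single hcd⟩
  refine reflTransGen_le_of_equivalence_of_le hequiv (fun a b hab => ?_) M N h
  obtain hab | hba := hab.contracts_or_contracts
  · exact ⟨b, .single hab, .refl⟩
  · exact ⟨a, .refl, .single hba⟩

lemma exists_isEmbedding_of_reflTransGen_contracts (h : ReflTransGen Contracts N K) :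
    ∃ e : Fin K.n → Fin N.n, IsEmbedding e := by
  induction h with
  | refl => exact ⟨_, .id N⟩
  | tail _ hstep ih =>
    obtain ⟨e, he⟩ := ih
    obtain ⟨d, hd, -⟩ := hstep
    exact ⟨_, he.comp hd⟩

lemma Irreducible.exists_surjective_isEmbedding (hM : Irreducible M)
    (h : ReflTransGen Contracts M K) :
    ∃ g : Fin M.n → Fin K.n, IsEmbedding g ∧ Function.Surjective g := by
  induction h with
  | refl => exact ⟨_, .id M, Function.surjective_id⟩
  | tail _ hstep ih =>
    obtain ⟨g, hg, hgs⟩ := ih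
    obtain ⟨e, he, hrem⟩ := hstep
    have hcompl : (Set.range e)ᶜ = ∅ := hgs.preimage_injective <|
      hM.eq_empty_of_removable <| hg.removable_preimage hrem (by simp [hgs.range_eq])
    have hrange : Set.range g ⊆ Set.range e := by simp [Set.compl_empty_iff.1 hcompl]
    obtain ⟨d, rfl⟩ := Set.range_subset_range_iff_exists_comp.1 hrange
    exact ⟨d, he.of_comp hg, hgs.of_comp_left he.injective⟩

theorem Irreducible.exists_isEmbedding_of_sEquiv (hM : Irreducible M) (h : SEquiv M N) :
    ∃ e : Fin M.n → Fin N.n, IsEmbedding e := by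
  obtain ⟨K, hMK, hNK⟩ := h.join_contracts
  obtain ⟨g, hg, -⟩ := hM.exists_surjective_isEmbedding hMK
  obtain ⟨e, he⟩ := exists_isEmbedding_of_reflTransGen_contracts hNK
  exact ⟨e ∘ g, he.comp hg⟩

end SkewAug

/-- If `(B'' ∣ A'')` is an irreducible skew-symmetric augmented
matrix of dimension `m` and `(B_0 ∣ A_0), …, (B_n ∣ A_n)` is a chain starting
at `(B'' ∣ A'')` in which each step is a permutation, a reduction of type 1
or 2, or an extension of type 1 or 2, then each `(B_i ∣ A_i)` has dimension
at least `m`, and whenever its dimension is exactly `m` it is a permutation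
of `(B'' ∣ A'')`. -/
theorem chain_dim_ge_of_irreducible (M : SkewAug) (hM : SkewAug.Irreducible M)
    (f : ℕ → SkewAug) (n : ℕ) (h0 : f 0 = M)
    (hstep : ∀ i, i < n → SkewAug.Move (f i) (f (i + 1))) :
    ∀ i, i ≤ n → M.n ≤ (f i).n ∧ ((f i).n = M.n → SkewAug.PermStep M (f i)) := by
  intro i hi
  have hchain : SkewAug.SEquiv M (f i) := h0 ▸
    (reflTransGen_of_succ_of_le (fun j k => SkewAug.Move (f j) (f k))
      (fun j hj => hstep j (hj.2.trans_le hi)) i.zero_le).lift f fun _ _ => id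
  obtain ⟨e, he⟩ := hM.exists_isEmbedding_of_sEquiv hchain
  exact ⟨he.dim_le, fun hn =>
    SkewAug.permStep_iff_exists_isEmbedding.2 ⟨hn.symm, e, he⟩⟩
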